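/- arXiv:2303.10799 — 2 statements merged into one kernel-verified Lean document; each statement's English description precedes it below -/
import Mathlib

section
/- Let x₁, x₂, x₃, x₄ ∈ ℝ² be the nodes of a positively oriented convex quadrilateral, i.e. the cross products of the two edge vectors emanating from each node are all strictly positive: cross(x₂−x₁,x₄−x₁) > 0, cross(x₃−x₂,x₁−x₂) > 0, cross(x₄−x₃,x₂−x₃) > 0, and cross(x₁−x₄,x₃−x₄) > 0. Then the Jacobian determinant of the isoparametric bilinear map φ is strictly positive at every point of the closed parametric square [−1,1]² (the element is not tangled). -/
/-!
A bilinear interpolant is a linear interpolant of linear interpolants, so its two partial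
derivatives are linear interpolants of opposite edge vectors. The cross product is bilinear, so the
Jacobian determinant is in turn the bilinear interpolant of its four corner values, which are a
quarter of the given cross products. A bilinear interpolant never leaves a convex set containing
its nodal values, here the half-line of positive reals.
-/

/-- Bilinear shape functions on the reference square `[-1,1]²`. -/
noncomputable def N1 (ξ η : ℝ) : ℝ := (1 - ξ) * (1 - η) / 4
noncomputable def N2 (ξ η : ℝ) : ℝ := (1 + ξ) * (1 - η) / 4
noncomputable def N3 (ξ η : ℝ) : ℝ := (1 + ξ) * (1 + η) / 4
noncomputable def N4 (ξ η : ℝ) : ℝ := (1 - ξ) * (1 + η) / 4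

/-- Isoparametric bilinear map of the Q4 element with nodes `x₁, x₂, x₃, x₄ ∈ ℝ²`. -/
noncomputable def bilinearMap (x1 x2 x3 x4 : ℝ × ℝ) (p : ℝ × ℝ) : ℝ × ℝ :=
  N1 p.1 p.2 • x1 + N2 p.1 p.2 • x2 + N3 p.1 p.2 • x3 + N4 p.1 p.2 • x4

/-- 2D cross product `a₁b₂ − a₂b₁`. -/
def cross (a b : ℝ × ℝ) : ℝ := a.1 * b.2 - a.2 * b.1

section Interpolation

variable {E : Type*} [AddCommGroup E] [Module ℝ E]

/-- Linear interpolation on the reference interval `[-1,1]`, with value `a` at `-1` and `b` at `1`.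
It is Mathlib's `AffineMap.lineMap`, reparametrized from `[0,1]`. -/
noncomputable def linearInterpolant (a b : E) (t : ℝ) : E :=
  AffineMap.lineMap a b ((1 + t) / 2)

/-- Bilinear interpolation on the reference square `[-1,1]²` of vectors `y₁, y₂, y₃, y₄` prescribed
at the corners, listed counterclockwise from `(-1,-1)`: along `ξ` on the two horizontal edges, then
along `η`. The values lie in an arbitrary vector space so that the notion applies both to the
element map and to its Jacobian determinant. -/
noncomputable def bilinearInterpolant (y1 y2 y3 y4 : E) (p : ℝ × ℝ) : E :=
  linearInterpolant (linearInterpolant y1 y2 p.1) (linearInterpolant y4 y3 p.1) p.2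

lemma linearInterpolant_eq (a b : E) (t : ℝ) :
    linearInterpolant a b t = ((1 - t) / 2) • a + ((1 + t) / 2) • b := by
  rw [linearInterpolant, AffineMap.lineMap_apply_module]
  module

lemma linearInterpolant_mem_of_convex {s : Set E} (hs : Convex ℝ s) {a b : E} (ha : a ∈ s)
    (hb : b ∈ s) {t : ℝ} (ht : t ∈ Set.Icc (-1) 1) : linearInterpolant a b t ∈ s :=
  hs.lineMap_mem ha hb ⟨by linarith [ht.1], by linarith [ht.2]⟩

lemma bilinearInterpolant_mem_of_convex {s : Set E} (hs : Convex ℝ s) {y1 y2 y3 y4 : E}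
    (h1 : y1 ∈ s) (h2 : y2 ∈ s) (h3 : y3 ∈ s) (h4 : y4 ∈ s) {p : ℝ × ℝ}
    (hp : p ∈ Set.Icc ((-1, -1) : ℝ × ℝ) (1, 1)) : bilinearInterpolant y1 y2 y3 y4 p ∈ s := by
  have hξ : p.1 ∈ Set.Icc (-1) 1 := ⟨hp.1.1, hp.2.1⟩
  have hη : p.2 ∈ Set.Icc (-1) 1 := ⟨hp.1.2, hp.2.2⟩
  exact linearInterpolant_mem_of_convex hs (linearInterpolant_mem_of_convex hs h1 h2 hξ)
    (linearInterpolant_mem_of_convex hs h4 h3 hξ) hη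

end Interpolation

section Derivative

variable {E F : Type*} [NormedAddCommGroup E] [NormedSpace ℝ E] [NormedAddCommGroup F]
  [NormedSpace ℝ F]

lemma hasFDerivAt_linearInterpolant_comp {f g : F → E} {t : F → ℝ} {f' g' : F →L[ℝ] E}
    {t' : F →L[ℝ] ℝ} {x : F} (hf : HasFDerivAt f f' x) (hg : HasFDerivAt g g' x)
    (ht : HasFDerivAt t t' x) :
    HasFDerivAt (fun y ↦ linearInterpolant (f y) (g y) (t y))
      (((1 - t x) / 2) • f' + ((1 + t x) / 2) • g'
        + t'.smulRight ((1 / 2 : ℝ) • (g x - f x))) x := by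
  have weight_left := (ht.const_sub 1).mul_const (2⁻¹ : ℝ)
  have weight_right := (ht.const_add 1).mul_const (2⁻¹ : ℝ)
  simp only [linearInterpolant_eq, div_eq_mul_inv]
  refine ((weight_left.smul hf).add (weight_right.smul hg)).congr_fderiv ?_
  ext v
  simp only [add_apply, smul_apply, neg_apply, ContinuousLinearMap.smulRight_apply, smul_eq_mul]
  module

lemma hasFDerivAt_bilinearInterpolant (y1 y2 y3 y4 : E) (p : ℝ × ℝ) :
    HasFDerivAt (bilinearInterpolant y1 y2 y3 y4)
      ((ContinuousLinearMap.fst ℝ ℝ ℝ).smulRight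
          ((1 / 2 : ℝ) • linearInterpolant (y2 - y1) (y3 - y4) p.2)
        + (ContinuousLinearMap.snd ℝ ℝ ℝ).smulRight
          ((1 / 2 : ℝ) • linearInterpolant (y4 - y1) (y3 - y2) p.1)) p := by
  have hasFDerivAt_edge (a b : E) := hasFDerivAt_linearInterpolant_comp (hasFDerivAt_const a p)
    (hasFDerivAt_const b p) hasFDerivAt_fst
  refine (hasFDerivAt_linearInterpolant_comp (hasFDerivAt_edge y1 y2)
    (hasFDerivAt_edge y4 y3) hasFDerivAt_snd).congr_fderiv ?_
  refine ContinuousLinearMap.ext fun v ↦ ?_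
  simp only [linearInterpolant_eq, add_apply, smul_apply, zero_apply,
    ContinuousLinearMap.smulRight_apply, ContinuousLinearMap.coe_fst',
    ContinuousLinearMap.coe_snd']
  module

end Derivative

lemma bilinearMap_eq_bilinearInterpolant (x1 x2 x3 x4 : ℝ × ℝ) :
    bilinearMap x1 x2 x3 x4 = bilinearInterpolant x1 x2 x3 x4 := by
  funext p
  simp only [bilinearMap, N1, N2, N3, N4, bilinearInterpolant, linearInterpolant_eq]
  module

lemma det_smulRight_fst_add_smulRight_snd (a b : ℝ × ℝ) :
    ((ContinuousLinearMap.fst ℝ ℝ ℝ).smulRight a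
      + (ContinuousLinearMap.snd ℝ ℝ ℝ).smulRight b).det = cross a b := by
  rw [ContinuousLinearMap.det, ← LinearMap.det_toMatrix (Module.Basis.finTwoProd ℝ),
    Matrix.det_fin_two]
  simp [LinearMap.toMatrix_apply, cross, mul_comm]

lemma cross_smul_smul (r s : ℝ) (a b : ℝ × ℝ) : cross (r • a) (s • b) = r * s * cross a b := by
  simp only [cross, Prod.smul_fst, Prod.smul_snd, smul_eq_mul]
  ring

lemma cross_linearInterpolant (a b c d : ℝ × ℝ) (ξ η : ℝ) :
    cross (linearInterpolant a b η) (linearInterpolant c d ξ) =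
      bilinearInterpolant (cross a c) (cross a d) (cross b d) (cross b c) (ξ, η) := by
  simp only [cross, bilinearInterpolant, linearInterpolant_eq, Prod.fst_add, Prod.snd_add,
    Prod.smul_fst, Prod.smul_snd, smul_eq_mul]
  ring

lemma det_fderiv_bilinearMap (x1 x2 x3 x4 p : ℝ × ℝ) :
    (fderiv ℝ (bilinearMap x1 x2 x3 x4) p).det =
      1 / 4 * bilinearInterpolant (cross (x2 - x1) (x4 - x1)) (cross (x3 - x2) (x1 - x2))
        (cross (x4 - x3) (x2 - x3)) (cross (x1 - x4) (x3 - x4)) p := by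
  -- At each corner the interpolated edge vectors are, up to sign, the two edges meeting there.
  have corner2 : cross (x2 - x1) (x3 - x2) = cross (x3 - x2) (x1 - x2) := by
    simp only [cross, Prod.fst_sub, Prod.snd_sub]; ring
  have corner3 : cross (x3 - x4) (x3 - x2) = cross (x4 - x3) (x2 - x3) := by
    simp only [cross, Prod.fst_sub, Prod.snd_sub]; ring
  have corner4 : cross (x3 - x4) (x4 - x1) = cross (x1 - x4) (x3 - x4) := by
    simp only [cross, Prod.fst_sub, Prod.snd_sub]; ring
  rw [bilinearMap_eq_bilinearInterpolant, (hasFDerivAt_bilinearInterpolant x1 x2 x3 x4 p).fderiv,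
    det_smulRight_fst_add_smulRight_snd, cross_smul_smul, cross_linearInterpolant, corner2, corner3,
    corner4]
  norm_num

/-- For a positively oriented convex quadrilateral, the Jacobian determinant of
the isoparametric bilinear map is strictly positive throughout the closed
parametric square `[-1,1]²`: the element is not tangled. -/
theorem convex_quad_jacobian_pos (x1 x2 x3 x4 : ℝ × ℝ)
    (h1 : cross (x2 - x1) (x4 - x1) > 0)
    (h2 : cross (x3 - x2) (x1 - x2) > 0)
    (h3 : cross (x4 - x3) (x2 - x3) > 0)
    (h4 : cross (x1 - x4) (x3 - x4) > 0) :
    ∀ p ∈ Set.Icc ((-1, -1) : ℝ × ℝ) (1, 1),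
      (fderiv ℝ (bilinearMap x1 x2 x3 x4) p).det > 0 := by
  intro p hp
  rw [det_fderiv_bilinearMap]
  have interpolant_pos := bilinearInterpolant_mem_of_convex (convex_Ioi (0 : ℝ)) h1 h2 h3 h4 hp
  exact mul_pos (by norm_num) interpolant_pos
end

section
/- Let U ⊆ ℝ² be an open connected set and φ : U → ℝ² a continuously differentiable map. If the Jacobian determinant det(Dφ) takes a strictly positive value at some point of U and a strictly negative value at some other point of U, then φ is not injective on U. (Hence a concave bilinear element, whose Jacobian determinant changes sign on the parametric square, necessarily folds onto itself: its parametric map is not fully invertible.) -/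
/-!
An injective map sends the small circle `z ↦ p + r z` to a loop that never meets the image of `p`,
so the winding number of `z ↦ φ (p + r z) - φ p` about `0` is defined; it does not change when `p`
moves a little, hence is the same at all points of a connected domain. Where `φ` has an invertible
derivative, this winding number is the sign of the Jacobian determinant, because a real-linear map
`z ↦ a z + b z̄` has determinant `|a|² - |b|²` and its larger term decides how often it winds.
-/

open Filter Metric Set Topology
open scoped ComplexConjugate

section ExpRelated

variable {X : Type*} [TopologicalSpace X]

/-- Two complex-valued functions are exp-related if they differ by a factor having a continuous
logarithm. For nowhere vanishing continuous functions on the circle, this says that they have the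
same winding number about `0`; it serves to compare winding numbers without defining them. -/
def ExpRelated (f g : X → ℂ) : Prop :=
  ∃ h : X → ℂ, Continuous h ∧ ∀ x, f x = g x * Complex.exp (h x)

namespace ExpRelated

variable {f g k : X → ℂ}

theorem symm (hfg : ExpRelated f g) : ExpRelated g f := by
  obtain ⟨h, hh, hfg⟩ := hfg
  refine ⟨fun x => -h x, hh.neg, fun x => ?_⟩
  rw [hfg x, mul_assoc, ← Complex.exp_add, add_neg_cancel, Complex.exp_zero, mul_one]

theorem trans (hfg : ExpRelated f g) (hgk : ExpRelated g k) : ExpRelated f k := by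
  obtain ⟨h₁, hh₁, hfg⟩ := hfg
  obtain ⟨h₂, hh₂, hgk⟩ := hgk
  refine ⟨fun x => h₂ x + h₁ x, hh₂.add hh₁, fun x => ?_⟩
  rw [hfg x, hgk x, mul_assoc, ← Complex.exp_add]

theorem const_mul_left {c : ℂ} (hc : c ≠ 0) (f : X → ℂ) : ExpRelated (fun x => c * f x) f :=
  ⟨fun _ => Complex.log c, continuous_const, fun x => by rw [Complex.exp_log hc, mul_comm]⟩

theorem of_norm_sub_lt (hf : Continuous f) (hg : Continuous g)
    (hfg : ∀ x, ‖f x - g x‖ < ‖g x‖) : ExpRelated f g := by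
  have hg₀ (x : X) : g x ≠ 0 := norm_pos_iff.1 ((norm_nonneg _).trans_lt (hfg x))
  have hslit (x : X) : f x / g x ∈ Complex.slitPlane := by
    have hlt : ‖f x / g x - 1‖ < 1 := by
      rw [div_sub_one (hg₀ x), norm_div, div_lt_one (norm_pos_iff.2 (hg₀ x))]
      exact hfg x
    simpa only [add_sub_cancel] using Complex.mem_slitPlane_of_norm_lt_one hlt
  refine ⟨fun x => Complex.log (f x / g x), (hf.div hg hg₀).clog hslit, fun x => ?_⟩
  rw [Complex.exp_log (Complex.slitPlane_ne_zero (hslit x)), mul_div_cancel₀ _ (hg₀ x)]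

theorem of_preconnectedSpace {S : Type*} [TopologicalSpace S] [PreconnectedSpace S]
    [CompactSpace X] {H : S → X → ℂ} (hH : Continuous ↿H) (hH₀ : ∀ s x, H s x ≠ 0) (s t : S) :
    ExpRelated (H s) (H t) := by
  have : Std.Symm fun s t => ExpRelated (H s) (H t) := ⟨fun _ _ => symm⟩
  refine PreconnectedSpace.induction₂ (fun s t => ExpRelated (H s) (H t)) (fun s => ?_)
    ⟨fun _ _ _ => trans⟩ s t
  have hclose : ∀ᶠ t in 𝓝 s, ∀ x ∈ univ, ‖H t x - H s x‖ < ‖H s x‖ := by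
    refine isCompact_univ.eventually_forall_of_forall_eventually fun x _ => ?_
    have hdiff : Continuous fun y : S × X => ‖H y.1 y.2 - H s y.2‖ := by fun_prop
    have hbase : Continuous fun y : S × X => ‖H s y.2‖ := by fun_prop
    refine hdiff.continuousAt.eventually_lt hbase.continuousAt ?_
    simpa only [sub_self, norm_zero] using norm_pos_iff.2 (hH₀ s x)
  filter_upwards [hclose] with t ht
  exact (of_norm_sub_lt (by fun_prop) (by fun_prop) fun x => ht x (mem_univ x)).symm

end ExpRelated

end ExpRelated

theorem eq_of_continuous_intCast {X : Type*} [TopologicalSpace X] [PreconnectedSpace X]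
    {n : X → ℤ} (hn : Continuous fun x => (n x : ℝ)) (x y : X) : n x = n y :=
  PreconnectedSpace.constant inferInstance
    (Int.isClosedEmbedding_coe_real.isEmbedding.continuous_iff.2 hn)

theorem eq_of_expRelated_zpow {m n : ℤ}
    (hmn : ExpRelated (fun z : Circle => (z : ℂ) ^ m) fun z => (z : ℂ) ^ n) : m = n := by
  obtain ⟨h, hh, hmn⟩ := hmn
  have hlift (t : ℝ) :
      ∃ k : ℤ, (k : ℝ) = (m * t - n * t - (h (Circle.exp t)).im) / (2 * Real.pi) := by
    have hexp : (Circle.exp t : ℂ) ^ m = (Circle.exp t : ℂ) ^ n * Complex.exp (h (Circle.exp t)) :=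
      hmn (Circle.exp t)
    rw [Circle.coe_exp, ← Complex.exp_int_mul, ← Complex.exp_int_mul, ← Complex.exp_add,
      Complex.exp_eq_exp_iff_exists_int] at hexp
    obtain ⟨k, hk⟩ := hexp
    have him : m * t = n * t + (h (Circle.exp t)).im + k * (2 * Real.pi) := by
      simpa using congrArg Complex.im hk
    refine ⟨k, ?_⟩
    rw [eq_div_iff Real.two_pi_pos.ne']
    linarith
  choose k hk using hlift
  have hk_cont : Continuous fun t => (k t : ℝ) := by
    simp only [hk]
    fun_prop
  have hperiod : (k (2 * Real.pi) : ℝ) = k 0 := by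
    rw [eq_of_continuous_intCast hk_cont]
  rw [hk, hk, Circle.exp_two_pi, Circle.exp_zero, div_left_inj' Real.two_pi_pos.ne'] at hperiod
  have hreal : (m : ℝ) = n := by
    refine mul_right_cancel₀ Real.two_pi_pos.ne' ?_
    linarith
  exact_mod_cast hreal

theorem exists_eq_mul_add_mul_conj (T : ℂ →L[ℝ] ℂ) :
    ∃ a b : ℂ, (∀ z, T z = a * z + b * conj z) ∧ T.det = ‖a‖ ^ 2 - ‖b‖ ^ 2 := by
  refine ⟨(T 1 - Complex.I * T Complex.I) / 2, (T 1 + Complex.I * T Complex.I) / 2,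
    fun z => ?_, ?_⟩
  · have hz : T z = z.re * T 1 + z.im * T Complex.I := by
      rw [← Complex.real_smul, ← Complex.real_smul, ← map_smul, ← map_smul, ← map_add]
      simp
    rw [hz, Complex.re_eq_add_conj, Complex.im_eq_sub_conj, div_mul_eq_div_div, Complex.div_I]
    ring
  · have hdet : T.det = (T 1).re * (T Complex.I).im - (T Complex.I).re * (T 1).im := by
      rw [ContinuousLinearMap.det, ← LinearMap.det_toMatrix Complex.basisOneI, Matrix.det_fin_two]
      simp [LinearMap.toMatrix_apply]
    rw [hdet, Complex.sq_norm, Complex.sq_norm, Complex.normSq_apply, Complex.normSq_apply]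
    simp only [Complex.div_ofNat_re, Complex.div_ofNat_im, Complex.add_re, Complex.add_im,
      Complex.sub_re, Complex.sub_im, Complex.mul_re, Complex.mul_im, Complex.I_re, Complex.I_im]
    ring

theorem expRelated_of_det_pos {T : ℂ →L[ℝ] ℂ} (hT : 0 < T.det) :
    ExpRelated (fun z : Circle => T z) fun z => (z : ℂ) ^ (1 : ℤ) := by
  obtain ⟨a, b, hab, hdet⟩ := exists_eq_mul_add_mul_conj T
  have hlt : ‖b‖ < ‖a‖ := lt_of_pow_lt_pow_left₀ 2 (norm_nonneg a) (by linarith)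
  have ha : a ≠ 0 := norm_pos_iff.1 ((norm_nonneg b).trans_lt hlt)
  simp only [zpow_one]
  refine (ExpRelated.of_norm_sub_lt (by fun_prop) (by fun_prop) fun z => ?_).trans
    (ExpRelated.const_mul_left ha _)
  simpa [hab] using hlt

theorem expRelated_of_det_neg {T : ℂ →L[ℝ] ℂ} (hT : T.det < 0) :
    ExpRelated (fun z : Circle => T z) fun z => (z : ℂ) ^ (-1 : ℤ) := by
  obtain ⟨a, b, hab, hdet⟩ := exists_eq_mul_add_mul_conj T
  have hlt : ‖a‖ < ‖b‖ := lt_of_pow_lt_pow_left₀ 2 (norm_nonneg b) (by linarith)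
  have hb : b ≠ 0 := norm_pos_iff.1 ((norm_nonneg a).trans_lt hlt)
  simp only [zpow_neg_one, ← Circle.coe_inv, Circle.coe_inv_eq_conj]
  refine (ExpRelated.of_norm_sub_lt (by fun_prop) (by fun_prop) fun z => ?_).trans
    (ExpRelated.const_mul_left hb _)
  simpa [hab] using hlt

theorem eventually_norm_sub_sub_lt_of_hasFDerivAt {𝕜 E F : Type*} [NontriviallyNormedField 𝕜]
    [NormedAddCommGroup E] [NormedSpace 𝕜 E] [NormedAddCommGroup F] [NormedSpace 𝕜 F]
    {f : E → F} {T : E ≃L[𝕜] F} {p : E} (hf : HasFDerivAt f (T : E →L[𝕜] F) p) :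
    ∀ᶠ v in 𝓝[≠] 0, ‖f (p + v) - f p - T v‖ < ‖T v‖ := by
  have hlittle := (hasFDerivAt_iff_isLittleO_nhds_zero.1 hf).trans_isBigO (T.isBigO_comp_rev id _)
  filter_upwards [(hlittle.def one_half_pos).filter_mono nhdsWithin_le_nhds,
    self_mem_nhdsWithin] with v hv hv₀
  have hpos : 0 < ‖T v‖ := norm_pos_iff.2 (T.map_ne_zero_iff.2 hv₀)
  exact hv.trans_lt (by simpa only [id] using by linarith)

theorem norm_ofReal_mul_circle {r : ℝ} (hr : 0 ≤ r) (z : Circle) : ‖(r : ℂ) * z‖ = r := by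
  rw [norm_mul, Circle.norm_coe, mul_one, Complex.norm_of_nonneg hr]

theorem eventually_forall_ofReal_mul_circle {P : ℂ → Prop} (hP : ∀ᶠ v in 𝓝[≠] 0, P v) :
    ∀ᶠ r : ℝ in 𝓝[>] 0, ∀ z : Circle, P (r * z) := by
  obtain ⟨ε, hε, hP⟩ := Metric.mem_nhdsWithin_iff.1 hP
  filter_upwards [Ioo_mem_nhdsGT hε] with r ⟨hr₀, hrε⟩ z
  have hnorm := norm_ofReal_mul_circle hr₀.le z
  exact hP ⟨by rwa [mem_ball_zero_iff, hnorm], norm_pos_iff.1 (by rwa [hnorm])⟩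

section DisplacementLoop

/-- The image under `ψ` of the circle of radius `r` about `p`, translated by `-ψ p`. Its winding
number about `0`, for small `r > 0`, is the local degree of `ψ` at `p`. -/
def displacementLoop (ψ : ℂ → ℂ) (p : ℂ) (r : ℝ) (z : Circle) : ℂ :=
  ψ (p + r * z) - ψ p

variable {ψ : ℂ → ℂ} {V : Set ℂ} {p q : ℂ}

theorem eventually_expRelated_displacementLoop_of_hasFDerivAt (hV : V ∈ 𝓝 p)
    (hψ : ContinuousOn ψ V) {T : ℂ →L[ℝ] ℂ} (hT : HasFDerivAt ψ T p) (hdet : T.det ≠ 0) :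
    ∀ᶠ r in 𝓝[>] 0, ExpRelated (displacementLoop ψ p r) fun z => T z := by
  have hlinear : ∀ᶠ v in 𝓝[≠] 0, ‖ψ (p + v) - ψ p - T v‖ < ‖T v‖ :=
    eventually_norm_sub_sub_lt_of_hasFDerivAt (T := T.toContinuousLinearEquivOfDetNeZero hdet) hT
  have hmem : ∀ᶠ v in 𝓝[≠] 0, p + v ∈ V :=
    ((continuous_const_add p).tendsto' 0 p (add_zero p)).eventually_mem hV
      |>.filter_mono nhdsWithin_le_nhds
  filter_upwards [eventually_forall_ofReal_mul_circle hlinear,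
    eventually_forall_ofReal_mul_circle hmem, self_mem_nhdsWithin] with r hlinear hmem hr
  have hloop : Continuous (displacementLoop ψ p r) :=
    (hψ.comp_continuous (by fun_prop) hmem).sub continuous_const
  have hscale : ExpRelated (fun z : Circle => T (r * z)) fun z => T z := by
    simp only [← Complex.real_smul, map_smul]
    exact .const_mul_left (Complex.ofReal_ne_zero.2 hr.ne') _
  exact (ExpRelated.of_norm_sub_lt hloop (by fun_prop) hlinear).trans hscale

theorem expRelated_displacementLoop_of_ball_subset {x : ℂ} {ε r : ℝ} (hV : ball x (ε + r) ⊆ V)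
    (hψ : ContinuousOn ψ V) (hinj : InjOn ψ V) (hr : 0 < r) (hp : p ∈ ball x ε)
    (hq : q ∈ ball x ε) : ExpRelated (displacementLoop ψ p r) (displacementLoop ψ q r) := by
  have hcenter (s : ball x ε) : (s : ℂ) ∈ V := hV (ball_subset_ball (by linarith) s.2)
  have hcircle (s : ball x ε) (z : Circle) : (s : ℂ) + r * z ∈ V := by
    refine hV ?_
    rw [mem_ball, dist_eq_norm, add_sub_right_comm]
    refine (norm_add_le _ _).trans_lt ?_
    rw [norm_ofReal_mul_circle hr.le]
    exact add_lt_add_left (mem_ball_iff_norm.1 s.2) r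
  have hcont : Continuous ↿fun (s : ball x ε) => displacementLoop ψ s r :=
    (hψ.comp_continuous (f := fun y : ball x ε × Circle => (y.1 : ℂ) + r * y.2) (by fun_prop)
      fun y => hcircle y.1 y.2).sub
    (hψ.comp_continuous (f := fun y : ball x ε × Circle => (y.1 : ℂ)) (by fun_prop)
      fun y => hcenter y.1)
  have hne (s : ball x ε) (z : Circle) : displacementLoop ψ s r z ≠ 0 := by
    refine sub_ne_zero.2 (hinj.ne (hcircle s z) (hcenter s) ?_)
    rw [Ne, add_eq_left, ← norm_eq_zero, norm_ofReal_mul_circle hr.le]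
    exact hr.ne'
  have : PreconnectedSpace (ball x ε) :=
    Subtype.preconnectedSpace (convex_ball x ε).isPreconnected
  exact .of_preconnectedSpace hcont hne ⟨p, hp⟩ ⟨q, hq⟩

theorem eventually_expRelated_displacementLoop_of_injOn (hV : IsOpen V) (hVc : IsPreconnected V)
    (hψ : ContinuousOn ψ V) (hinj : InjOn ψ V) (hp : p ∈ V) (hq : q ∈ V) :
    ∀ᶠ r in 𝓝[>] 0, ExpRelated (displacementLoop ψ p r) (displacementLoop ψ q r) := by
  refine hVc.induction₂
    (fun p q => ∀ᶠ r in 𝓝[>] 0, ExpRelated (displacementLoop ψ p r) (displacementLoop ψ q r))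
    (fun x hx => ?_) (fun _ _ _ _ _ _ hxy hyz => ?_) (fun _ _ _ _ hxy => ?_) hp hq
  · obtain ⟨ε, hε, hball⟩ := Metric.isOpen_iff.1 hV x hx
    filter_upwards [nhdsWithin_le_nhds (ball_mem_nhds x (half_pos hε))] with y hy
    filter_upwards [Ioo_mem_nhdsGT (half_pos hε)] with r ⟨hr₀, hrε⟩
    exact expRelated_displacementLoop_of_ball_subset
      ((ball_subset_ball (by linarith)).trans hball) hψ hinj hr₀ (mem_ball_self (half_pos hε)) hy
  · filter_upwards [hxy, hyz] with r hxy hyz using hxy.trans hyz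
  · filter_upwards [hxy] with r hxy using hxy.symm

theorem not_injOn_of_det_pos_of_det_neg (hV : IsOpen V) (hVc : IsPreconnected V)
    (hψ : ContinuousOn ψ V) (hp : p ∈ V) (hq : q ∈ V) {A B : ℂ →L[ℝ] ℂ}
    (hA : HasFDerivAt ψ A p) (hB : HasFDerivAt ψ B q) (hpos : 0 < A.det) (hneg : B.det < 0) :
    ¬ InjOn ψ V := by
  intro hinj
  obtain ⟨r, hpq, hrA, hrB⟩ :=
    ((eventually_expRelated_displacementLoop_of_injOn hV hVc hψ hinj hp hq).and
      ((eventually_expRelated_displacementLoop_of_hasFDerivAt (hV.mem_nhds hp) hψ hA hpos.ne').and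
        (eventually_expRelated_displacementLoop_of_hasFDerivAt (hV.mem_nhds hq) hψ hB
          hneg.ne))).exists
  have hAB : ExpRelated (fun z : Circle => A z) fun z => B z := hrA.symm.trans (hpq.trans hrB)
  have hdegree : (1 : ℤ) = -1 := eq_of_expRelated_zpow <|
    (expRelated_of_det_pos hpos).symm.trans (hAB.trans (expRelated_of_det_neg hneg))
  exact absurd hdegree (by decide)

end DisplacementLoop

theorem sign_change_of_jacobian_not_injective_general {E : Type*} [NormedAddCommGroup E]
    [NormedSpace ℝ E] (hE : Module.finrank ℝ E = 2) {U : Set E} (hU : IsOpen U)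
    (hUc : IsPreconnected U) {φ : E → E} (hφ : ContinuousOn φ U) {p q : E} (hp : p ∈ U)
    (hq : q ∈ U) {A B : E →L[ℝ] E} (hA : HasFDerivAt φ A p) (hB : HasFDerivAt φ B q)
    (hpos : 0 < A.det) (hneg : B.det < 0) : ¬ InjOn φ U := by
  intro hinj
  have : FiniteDimensional ℝ E := .of_finrank_pos (by rw [hE]; exact two_pos)
  let e : E ≃L[ℝ] ℂ := .ofFinrankEq (by rw [hE, Complex.finrank_real_complex])
  have hderiv {x : E} {T : E →L[ℝ] E} (hT : HasFDerivAt φ T x) :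
      HasFDerivAt (e ∘ φ ∘ e.symm) ((e : E →L[ℝ] ℂ) ∘L T ∘L (e.symm : ℂ →L[ℝ] E)) (e x) := by
    rw [← e.symm_apply_apply x] at hT
    exact e.hasFDerivAt.comp _ (hT.comp _ e.symm.hasFDerivAt)
  have hdet (T : E →L[ℝ] E) :
      ((e : E →L[ℝ] ℂ) ∘L T ∘L (e.symm : ℂ →L[ℝ] E)).det = T.det :=
    LinearMap.det_conj (T : E →ₗ[ℝ] E) e.toLinearEquiv
  have hmaps : MapsTo e.symm (e.symm ⁻¹' U) U := mapsTo_preimage _ _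
  refine not_injOn_of_det_pos_of_det_neg (hU.preimage e.symm.continuous) ?_
    (e.continuous.comp_continuousOn (hφ.comp e.symm.continuous.continuousOn hmaps))
    (by simpa using hp) (by simpa using hq) (hderiv hA) (hderiv hB)
    (by rwa [hdet]) (by rwa [hdet])
    (e.injective.comp_injOn (hinj.comp e.symm.injective.injOn hmaps))
  exact e.symm.toHomeomorph.isPreconnected_preimage.2 hUc

/-- If a `C¹` map `φ : U → ℝ²` on an open connected set `U ⊆ ℝ²` has Jacobian
determinant strictly positive at some point of `U` and strictly negative at
some other point of `U`, then `φ` is not injective on `U`.  (Hence a concave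
bilinear element, whose Jacobian determinant changes sign on the parametric
square, necessarily folds onto itself.) -/
theorem sign_change_of_jacobian_not_injective
    (U : Set (ℝ × ℝ)) (hU : IsOpen U) (hConn : IsConnected U)
    (φ : ℝ × ℝ → ℝ × ℝ) (hφ : ContDiffOn ℝ 1 φ U)
    (p q : ℝ × ℝ) (hp : p ∈ U) (hq : q ∈ U)
    (hpos : (fderiv ℝ φ p).det > 0)
    (hneg : (fderiv ℝ φ q).det < 0) :
    ¬ Set.InjOn φ U := by
  have hderiv {x : ℝ × ℝ} (hx : x ∈ U) : HasFDerivAt φ (fderiv ℝ φ x) x :=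
    ((hφ.contDiffAt (hU.mem_nhds hx)).differentiableAt one_ne_zero).hasFDerivAt
  exact sign_change_of_jacobian_not_injective_general (by simp) hU hConn.isPreconnected
    hφ.continuousOn hp hq (hderiv hp) (hderiv hq) hpos hneg
end
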